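/- arXiv:1103.1945 — 2 statements merged into one kernel-verified Lean document; each statement's English description precedes it below -/
import Mathlib

section
/- Let μ be a probability measure on ℝ with infinite support contained in [−M, M], with orthonormal polynomials {p_n}, CD kernel K_n, measures dμ_n = (K_n(x,x;μ)/(n+1)) dμ, and normalized zero-counting measures ν_n. Then for every fixed k ∈ ℕ there exists a constant C (depending only on k and μ) such that for all n ∈ ℕ, |∫_ℝ x^k dμ_n(x) − ∫_ℝ x^k dν_{n+1}(x)| ≤ C/(n+1). -/
open MeasureTheory Polynomial Filter
open scoped ENNReal

/-- The topological support of a measure. -/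
def measSupport {α : Type*} [TopologicalSpace α] [MeasurableSpace α] (μ : Measure α) : Set α :=
  {x | ∀ U : Set α, IsOpen U → x ∈ U → μ U ≠ 0}

/-!
Let `Q` be the Gauss quadrature of `μ` at the zeros of `p_N`, where `N = n + 1`. The quadrature
weight at a zero `x` is `1 / K_{N-1}(x, x)`, so `Q (q * ∑_{j<N} p_j²)` is exactly the sum of `q`
over the zeros of `p_N`. As `Q` agrees with `μ` in degrees below `2 * N`, the two functionals
differ on `q * p_j²` only for the last `deg q / 2` indices `j < N`. Both are positive and give
`p_j²` mass `1`, so each of these terms contributes at most `2 * sup |q|`.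
-/

theorem natDegree_div_eq_sub {K : Type*} [Field K] (f : K[X]) {g : K[X]} (hg : g ≠ 0) :
    (f / g).natDegree = f.natDegree - g.natDegree := by
  have hlead : g.leadingCoeff⁻¹ ≠ 0 := inv_ne_zero (leadingCoeff_ne_zero.2 hg)
  rw [div_def, natDegree_C_mul hlead, natDegree_divByMonic f (monic_mul_leadingCoeff_inv hg),
    natDegree_mul_C hlead]

section Orthonormal

variable {K : Type*} [Field K] {L : K[X] →ₗ[K] K} {p : Polynomial.Sequence K}

/-- The polynomial sequence `p` is orthonormal for the bilinear form `(f, g) ↦ L (f * g)` of a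
moment functional `L`. -/
def IsOrthonormalFor (L : K[X] →ₗ[K] K) (p : Polynomial.Sequence K) : Prop :=
  ∀ m n, L (p m * p n) = if m = n then 1 else 0

namespace IsOrthonormalFor

theorem apply_sq (hp : IsOrthonormalFor L p) (n : ℕ) : L (p n ^ 2) = 1 := by
  rw [sq, hp, if_pos rfl]

theorem sum_apply_mul_smul_eq (hp : IsOrthonormalFor L p) {N : ℕ} {f : K[X]}
    (hf : f.degree < N) : ∑ j ∈ Finset.range N, L (f * p j) • p j = f := by
  have hspan : f ∈ Submodule.span K (p '' Set.Iio N) := by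
    rw [p.span_degreeLT fun i _ => (leadingCoeff_ne_zero.2 (p.ne_zero i)).isUnit]
    exact mem_degreeLT.2 hf
  clear hf
  induction hspan using Submodule.span_induction with
  | mem g hg =>
    obtain ⟨i, hi, rfl⟩ := hg
    simpa [hp i] using fun h => absurd hi h.not_gt
  | zero => simp
  | add g h _ _ hg hh =>
    simp only [add_mul, map_add, add_smul, Finset.sum_add_distrib, hg, hh]
  | smul c g _ hg =>
    simp only [smul_mul_assoc, map_smul, smul_assoc, ← Finset.smul_sum, hg]

theorem apply_mul_eq_zero (hp : IsOrthonormalFor L p) {N : ℕ} {f : K[X]}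
    (hf : f.degree < N) : L (p N * f) = 0 := by
  rw [← hp.sum_apply_mul_smul_eq hf, Finset.mul_sum, map_sum]
  refine Finset.sum_eq_zero fun j hj => ?_
  rw [mul_smul_comm, map_smul, hp, if_neg (Finset.mem_range.1 hj).ne', smul_zero]

theorem eq_zero_of_forall_apply_mul_eq_zero (hp : IsOrthonormalFor L p) {f : K[X]}
    (hf : ∀ g, L (f * g) = 0) : f = 0 := by
  have hdeg : f.degree < (f.natDegree + 1 : ℕ) :=
    degree_le_natDegree.trans_lt (by exact_mod_cast f.natDegree.lt_succ_self)
  simpa [hf] using (hp.sum_apply_mul_smul_eq hdeg).symm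

end IsOrthonormalFor

end Orthonormal

section Quadrature

variable {K : Type*} [Field K] [DecidableEq K] {L : K[X] →ₗ[K] K} {t : Finset K}

/-- The interpolatory quadrature rule of the functional `L` with nodes `t`: apply `L` to the
Lagrange interpolant at `t`. -/
noncomputable def quadrature (L : K[X] →ₗ[K] K) (t : Finset K) : K[X] →ₗ[K] K :=
  ∑ x ∈ t, L (Lagrange.basis t id x) • leval x

theorem quadrature_apply (f : K[X]) :
    quadrature L t f = ∑ x ∈ t, L (Lagrange.basis t id x) * f.eval x := by
  simp [quadrature]

theorem quadrature_apply_of_degree_lt {f : K[X]} (hf : f.degree < t.card) :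
    quadrature L t f = L f := by
  conv_rhs => rw [Lagrange.eq_interpolate (v := id) Function.injective_id.injOn hf]
  rw [quadrature_apply, Lagrange.interpolate_apply, map_sum]
  refine Finset.sum_congr rfl fun x _ => ?_
  rw [← smul_eq_C_mul, map_smul, smul_eq_mul, mul_comm, id]

theorem quadrature_basis_mul {x : K} (hx : x ∈ t) (f : K[X]) :
    quadrature L t (Lagrange.basis t id x * f) = L (Lagrange.basis t id x) * f.eval x := by
  have hself : (Lagrange.basis t id x).eval x = 1 :=
    Lagrange.eval_basis_self (v := id) Function.injective_id.injOn hx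
  rw [quadrature_apply, Finset.sum_eq_single_of_mem x hx, eval_mul, hself, one_mul]
  intro y hy hyx
  have hother : (Lagrange.basis t id x).eval y = 0 :=
    Lagrange.eval_basis_of_ne (v := id) hyx.symm hy
  rw [eval_mul, hother, zero_mul, mul_zero]

variable {p : Polynomial.Sequence K} {N : ℕ}

theorem IsOrthonormalFor.quadrature_roots_apply (hp : IsOrthonormalFor L p)
    (hN : (p N).roots.toFinset.card = N) {f : K[X]} (hf : f.natDegree < 2 * N) :
    quadrature L (p N).roots.toFinset f = L f := by
  have hmod : (f % p N).degree < N := by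
    simpa using degree_mod_lt f (p.ne_zero N)
  have hdiv : (f / p N).degree < N := by
    refine degree_le_natDegree.trans_lt (Nat.cast_lt.2 ?_)
    rw [natDegree_div_eq_sub f (p.ne_zero N), p.natDegree_eq]
    omega
  have heval : ∀ x ∈ (p N).roots.toFinset, f.eval x = (f % p N).eval x := by
    intro x hx
    have hroot : (p N).eval x = 0 := by simpa using hx
    conv_lhs => rw [← EuclideanDomain.div_add_mod f (p N)]
    simp [hroot]
  calc quadrature L (p N).roots.toFinset f
      = quadrature L (p N).roots.toFinset (f % p N) := by
        simp only [quadrature_apply]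
        exact Finset.sum_congr rfl fun x hx => by rw [heval x hx]
    _ = L (f % p N) := quadrature_apply_of_degree_lt (by rwa [hN])
    _ = L (p N * (f / p N) + f % p N) := by
        rw [map_add, hp.apply_mul_eq_zero hdiv, zero_add]
    _ = L f := by rw [EuclideanDomain.div_add_mod]

theorem IsOrthonormalFor.apply_basis_mul_sum_sq_eval (hp : IsOrthonormalFor L p)
    (hN : (p N).roots.toFinset.card = N) {x : K} (hx : x ∈ (p N).roots.toFinset) :
    L (Lagrange.basis (p N).roots.toFinset id x) *
      ∑ j ∈ Finset.range N, (p j).eval x ^ 2 = 1 := by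
  set ℓ := Lagrange.basis (p N).roots.toFinset id x
  have hNpos : 0 < N := hN ▸ Finset.card_pos.2 ⟨x, hx⟩
  have hnatDegree : ℓ.natDegree = N - 1 := by
    rw [Lagrange.natDegree_basis Function.injective_id.injOn hx, hN]
  have hdegree : ℓ.degree < N :=
    degree_le_natDegree.trans_lt (Nat.cast_lt.2 (by omega))
  have hcoeff : ∀ j ∈ Finset.range N, L (ℓ * p j) = L ℓ * (p j).eval x := by
    intro j hj
    have hlt : (ℓ * p j).natDegree < 2 * N := by
      have hmul := natDegree_mul_le (p := ℓ) (q := p j)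
      rw [p.natDegree_eq] at hmul
      rw [Finset.mem_range] at hj
      omega
    rw [← hp.quadrature_roots_apply hN hlt, quadrature_basis_mul hx]
  calc L ℓ * ∑ j ∈ Finset.range N, (p j).eval x ^ 2
      = (∑ j ∈ Finset.range N, L (ℓ * p j) • p j).eval x := by
        rw [eval_finsetSum, Finset.mul_sum]
        refine Finset.sum_congr rfl fun j hj => ?_
        rw [eval_smul, hcoeff j hj, smul_eq_mul, sq, mul_assoc]
    _ = ℓ.eval x := by rw [hp.sum_apply_mul_smul_eq hdegree]
    _ = 1 := Lagrange.eval_basis_self (v := id) Function.injective_id.injOn hx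

theorem IsOrthonormalFor.quadrature_roots_mul_sum_sq (hp : IsOrthonormalFor L p)
    (hN : (p N).roots.toFinset.card = N) (q : K[X]) :
    quadrature L (p N).roots.toFinset (q * ∑ j ∈ Finset.range N, p j ^ 2) =
      ∑ x ∈ (p N).roots.toFinset, q.eval x := by
  rw [quadrature_apply]
  refine Finset.sum_congr rfl fun x hx => ?_
  simp only [eval_mul, eval_finsetSum, eval_pow]
  rw [mul_left_comm, hp.apply_basis_mul_sum_sq_eval hN hx, mul_one]

end Quadrature

section Positive

variable {L : ℝ[X] →ₗ[ℝ] ℝ} {s : Set ℝ} {p : Polynomial.Sequence ℝ}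

/-- The moment functional `L` is nonnegative on polynomials which are nonnegative on `s`. -/
def IsPositiveOn (L : ℝ[X] →ₗ[ℝ] ℝ) (s : Set ℝ) : Prop :=
  ∀ f : ℝ[X], (∀ x ∈ s, 0 ≤ f.eval x) → 0 ≤ L f

namespace IsPositiveOn

theorem abs_apply_mul_le (hL : IsPositiveOn L s) {f q : ℝ[X]} {B : ℝ}
    (hf : ∀ x ∈ s, 0 ≤ f.eval x) (hq : ∀ x ∈ s, |q.eval x| ≤ B) : |L (q * f)| ≤ B * L f := by
  have hsub : 0 ≤ L (B • f - q * f) := hL _ fun x hx => by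
    simp only [eval_sub, eval_smul, eval_mul, smul_eq_mul, ← sub_mul]
    exact mul_nonneg (sub_nonneg.2 (abs_le.1 (hq x hx)).2) (hf x hx)
  have hadd : 0 ≤ L (B • f + q * f) := hL _ fun x hx => by
    simp only [eval_add, eval_smul, eval_mul, smul_eq_mul, ← add_mul]
    exact mul_nonneg (by linarith [(abs_le.1 (hq x hx)).1]) (hf x hx)
  simp only [map_sub, map_add, map_smul, smul_eq_mul] at hsub hadd
  exact abs_le.2 ⟨by linarith, by linarith⟩

theorem apply_mul_eq_zero (hL : IsPositiveOn L s) {f : ℝ[X]} (hf : ∀ x ∈ s, 0 ≤ f.eval x)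
    (hf0 : L f = 0) (g : ℝ[X]) : L (f * g) = 0 := by
  have hquad : ∀ c : ℝ, 0 ≤ L (f * g ^ 2) * (c * c) + 2 * L (f * g) * c + 0 := by
    intro c
    have hexp : f * (c • g + 1) ^ 2 = (c * c) • (f * g ^ 2) + (2 * c) • (f * g) + f := by
      simp only [smul_eq_C_mul, C_mul, C_ofNat]
      ring
    have hnonneg := hL (f * (c • g + 1) ^ 2) fun x hx => by
      rw [eval_mul, eval_pow]
      exact mul_nonneg (hf x hx) (sq_nonneg _)
    rw [hexp, map_add, map_add, map_smul, map_smul, hf0, smul_eq_mul, smul_eq_mul] at hnonneg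
    linarith
  have hdiscrim := discrim_le_zero hquad
  rw [discrim] at hdiscrim
  nlinarith [sq_nonneg (L (f * g))]

theorem apply_pos (hL : IsPositiveOn L s) (hp : IsOrthonormalFor L p) {f : ℝ[X]}
    (hf : ∀ x ∈ s, 0 ≤ f.eval x) (hf0 : f ≠ 0) : 0 < L f :=
  (hL f hf).lt_of_ne' fun h =>
    hf0 (hp.eq_zero_of_forall_apply_mul_eq_zero (hL.apply_mul_eq_zero hf h))

theorem exists_eval_neg_of_dvd (hL : IsPositiveOn L s) (hp : IsOrthonormalFor L p) {N : ℕ}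
    {g : ℝ[X]} (hg : 0 < g.natDegree) (hdvd : g ∣ p N) : ∃ x ∈ s, g.eval x < 0 := by
  by_contra! hnonneg
  obtain ⟨r, hr⟩ := hdvd
  have hg0 : g ≠ 0 := ne_zero_of_natDegree_gt hg
  have hr0 : r ≠ 0 := right_ne_zero_of_mul (hr ▸ p.ne_zero N)
  have hdegree : r.degree < N := by
    have := natDegree_mul hg0 hr0
    rw [← hr, p.natDegree_eq] at this
    exact degree_le_natDegree.trans_lt (Nat.cast_lt.2 (by omega))
  have hpos : 0 < L (g * r ^ 2) := hL.apply_pos hp (fun x hx => by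
    rw [eval_mul, eval_pow]
    exact mul_nonneg (hnonneg x hx) (sq_nonneg _)) (mul_ne_zero hg0 (pow_ne_zero 2 hr0))
  have hzero : L (g * r ^ 2) = 0 := by
    rw [sq, ← mul_assoc, ← hr, hp.apply_mul_eq_zero hdegree]
  exact hpos.ne' hzero

theorem exists_isRoot_of_dvd (hL : IsPositiveOn L s) (hs : IsPreconnected s)
    (hp : IsOrthonormalFor L p) {N : ℕ} {g : ℝ[X]} (hg : 0 < g.natDegree) (hdvd : g ∣ p N) :
    ∃ x ∈ s, g.IsRoot x := by
  obtain ⟨a, ha, hneg⟩ := hL.exists_eval_neg_of_dvd hp hg hdvd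
  obtain ⟨b, hb, hpos⟩ :=
    hL.exists_eval_neg_of_dvd hp (g := -g) (by rwa [natDegree_neg]) (neg_dvd.2 hdvd)
  rw [eval_neg, neg_lt_zero] at hpos
  exact hs.intermediate_value₂ ha hb g.continuousOn continuousOn_const hneg.le hpos.le

theorem mem_of_isRoot (hL : IsPositiveOn L s) (hs : IsPreconnected s)
    (hp : IsOrthonormalFor L p) {N : ℕ} {x : ℝ} (hx : (p N).IsRoot x) : x ∈ s := by
  obtain ⟨y, hy, hroot⟩ :=
    hL.exists_isRoot_of_dvd hs hp (natDegree_X_sub_C x ▸ one_pos) (dvd_iff_isRoot.2 hx)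
  rwa [root_X_sub_C.1 hroot]

theorem nodup_roots (hL : IsPositiveOn L s) (hp : IsOrthonormalFor L p) (N : ℕ) :
    (p N).roots.Nodup := by
  refine Multiset.nodup_iff_count_le_one.2 fun x => ?_
  by_contra! hmult
  rw [count_roots] at hmult
  obtain ⟨y, -, hneg⟩ := hL.exists_eval_neg_of_dvd hp
    (by simp) ((le_rootMultiplicity_iff (p.ne_zero N)).1 hmult)
  rw [eval_pow] at hneg
  exact hneg.not_ge (sq_nonneg _)

theorem card_roots_toFinset (hL : IsPositiveOn L s) (hs : IsPreconnected s)
    (hp : IsOrthonormalFor L p) (N : ℕ) : (p N).roots.toFinset.card = N := by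
  obtain ⟨r, hr, hcard, hroots⟩ := exists_prod_multiset_X_sub_C_mul (p N)
  have hconst : r.natDegree = 0 := by
    by_contra hpos
    obtain ⟨x, -, hx⟩ := hL.exists_isRoot_of_dvd hs hp (Nat.pos_of_ne_zero hpos)
      (Dvd.intro_left _ hr)
    have hr0 : r ≠ 0 := by rintro rfl; simp at hpos
    simpa [hroots] using (mem_roots hr0).2 hx
  rw [Multiset.toFinset_card_of_nodup (hL.nodup_roots hp N)]
  simpa [hconst] using hcard

theorem quadrature_roots (hL : IsPositiveOn L s) (hs : IsPreconnected s)
    (hp : IsOrthonormalFor L p) (N : ℕ) :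
    IsPositiveOn (quadrature L (p N).roots.toFinset) s := by
  have hN := hL.card_roots_toFinset hs hp N
  have hweight : ∀ x ∈ (p N).roots.toFinset,
      0 ≤ L (Lagrange.basis (p N).roots.toFinset id x) := by
    intro x hx
    set ℓ := Lagrange.basis (p N).roots.toFinset id x
    have hlt : (ℓ * ℓ).natDegree < 2 * N := by
      have hNpos : 0 < N := hN ▸ Finset.card_pos.2 ⟨x, hx⟩
      have hnatDegree : ℓ.natDegree = N - 1 := by
        rw [Lagrange.natDegree_basis Function.injective_id.injOn hx, hN]
      have := natDegree_mul_le (p := ℓ) (q := ℓ)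
      omega
    have hsq : L ℓ = L (ℓ * ℓ) := by
      have hself : ℓ.eval x = 1 :=
        Lagrange.eval_basis_self (v := id) Function.injective_id.injOn hx
      rw [← hp.quadrature_roots_apply hN hlt, quadrature_basis_mul hx, hself, mul_one]
    rw [hsq]
    exact hL _ fun y _ => by rw [eval_mul]; exact mul_self_nonneg _
  intro f hf
  rw [quadrature_apply]
  refine Finset.sum_nonneg fun x hx => mul_nonneg (hweight x hx) (hf x ?_)
  exact hL.mem_of_isRoot hs hp (isRoot_of_mem_roots (Multiset.mem_toFinset.1 hx))

theorem nonneg_of_abs_eval_le (hL : IsPositiveOn L s) (hp : IsOrthonormalFor L p) {q : ℝ[X]}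
    {B : ℝ} (hq : ∀ x ∈ s, |q.eval x| ≤ B) : 0 ≤ B := by
  have hbound := (abs_nonneg _).trans
    (hL.abs_apply_mul_le (f := p 0 ^ 2) (by simp [sq_nonneg]) hq)
  rwa [hp.apply_sq, mul_one] at hbound

theorem abs_apply_mul_sq_sub_quadrature_le (hL : IsPositiveOn L s) (hs : IsPreconnected s)
    (hp : IsOrthonormalFor L p) {q : ℝ[X]} {B : ℝ} (hq : ∀ x ∈ s, |q.eval x| ≤ B) {j N : ℕ}
    (hj : j < N) :
    |L (q * p j ^ 2) - quadrature L (p N).roots.toFinset (q * p j ^ 2)| ≤ 2 * B := by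
  set Q := quadrature L (p N).roots.toFinset
  have hsq : ∀ x ∈ s, 0 ≤ (p j ^ 2).eval x := by simp [sq_nonneg]
  have hQsq : Q (p j ^ 2) = 1 := by
    have hlt : (p j ^ 2).natDegree < 2 * N := by
      rw [natDegree_pow, p.natDegree_eq]
      omega
    rw [hp.quadrature_roots_apply (hL.card_roots_toFinset hs hp N) hlt, hp.apply_sq]
  have hLj : |L (q * p j ^ 2)| ≤ B := by
    simpa [hp.apply_sq] using hL.abs_apply_mul_le hsq hq
  have hQj : |Q (q * p j ^ 2)| ≤ B := by
    have hbound := (hL.quadrature_roots hs hp N).abs_apply_mul_le hsq hq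
    rwa [hQsq, mul_one] at hbound
  linarith [abs_sub (L (q * p j ^ 2)) (Q (q * p j ^ 2))]

theorem abs_apply_mul_sum_sq_sub_sum_roots_le (hL : IsPositiveOn L s) (hs : IsPreconnected s)
    (hp : IsOrthonormalFor L p) {q : ℝ[X]} {B : ℝ} (hq : ∀ x ∈ s, |q.eval x| ≤ B) (N : ℕ) :
    |L (q * ∑ j ∈ Finset.range N, p j ^ 2) - ((p N).roots.map q.eval).sum| ≤
      q.natDegree * B := by
  set Q := quadrature L (p N).roots.toFinset
  set lastIndices := Finset.Ico (N - q.natDegree / 2) N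
  have hN := hL.card_roots_toFinset hs hp N
  have hroots : ((p N).roots.map q.eval).sum = Q (q * ∑ j ∈ Finset.range N, p j ^ 2) := by
    rw [hp.quadrature_roots_mul_sum_sq hN, Finset.sum, Multiset.toFinset_val,
      (hL.nodup_roots hp N).dedup]
  have hexact : ∀ j ∈ Finset.range N, j ∉ lastIndices →
      L (q * p j ^ 2) - Q (q * p j ^ 2) = 0 := by
    intro j hj hlast
    rw [Finset.mem_range] at hj
    rw [Finset.mem_Ico] at hlast
    have hdegree : (q * p j ^ 2).natDegree ≤ q.natDegree + 2 * j :=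
      natDegree_mul_le.trans (by rw [natDegree_pow, p.natDegree_eq])
    exact sub_eq_zero.2 (hp.quadrature_roots_apply hN (by omega)).symm
  have hsubset : lastIndices ⊆ Finset.range N := fun j hj =>
    Finset.mem_range.2 (Finset.mem_Ico.1 hj).2
  have hcard : (lastIndices.card : ℝ) * 2 ≤ q.natDegree := by
    rw [Nat.card_Ico]
    exact_mod_cast (by omega)
  calc |L (q * ∑ j ∈ Finset.range N, p j ^ 2) - ((p N).roots.map q.eval).sum|
      = |∑ j ∈ lastIndices, (L (q * p j ^ 2) - Q (q * p j ^ 2))| := by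
        rw [hroots, Finset.mul_sum, map_sum, map_sum, ← Finset.sum_sub_distrib,
          Finset.sum_subset hsubset hexact]
    _ ≤ ∑ j ∈ lastIndices, |L (q * p j ^ 2) - Q (q * p j ^ 2)| :=
        Finset.abs_sum_le_sum_abs _ _
    _ ≤ lastIndices.card • (2 * B) := Finset.sum_le_card_nsmul _ _ _ fun j hj =>
        hL.abs_apply_mul_sq_sub_quadrature_le hs hp hq (Finset.mem_Ico.1 hj).2
    _ = lastIndices.card * 2 * B := by rw [nsmul_eq_mul, mul_assoc]
    _ ≤ q.natDegree * B :=
        mul_le_mul_of_nonneg_right hcard (hL.nonneg_of_abs_eval_le hp hq)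

end IsPositiveOn

end Positive

section Measures

theorem measSupport_eq_support {α : Type*} [TopologicalSpace α] [MeasurableSpace α]
    (μ : Measure α) : measSupport μ = μ.support := by
  ext x
  simp only [measSupport, Measure.support_eq_forall_isOpen, Set.mem_ofPred_eq, pos_iff_ne_zero]
  exact forall_congr' fun U => forall_comm

theorem ae_mem_of_measSupport_subset {α : Type*} [TopologicalSpace α]
    [HereditarilyLindelofSpace α] [MeasurableSpace α] {μ : Measure α} {s : Set α}
    (hs : measSupport μ ⊆ s) : ∀ᵐ x ∂μ, x ∈ s :=
  mem_of_superset Measure.support_mem_ae (measSupport_eq_support μ ▸ hs)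

theorem integrable_of_ae_mem_isCompact {α E : Type*} [TopologicalSpace α] [T2Space α]
    [MeasurableSpace α] [OpensMeasurableSpace α] [NormedAddCommGroup E]
    [SecondCountableTopologyEither α E] {μ : Measure α} [IsFiniteMeasureOnCompacts μ]
    {s : Set α} (hs : IsCompact s) (hμ : ∀ᵐ x ∂μ, x ∈ s) {f : α → E} (hf : Continuous f) :
    Integrable f μ := by
  rw [← Measure.restrict_eq_self_of_ae_mem hμ]
  exact hf.continuousOn.integrableOn_compact hs

/-- The functional `f ↦ ∫ f dμ` on polynomials, for a measure with finite moments. -/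
noncomputable def momentFunctional (μ : Measure ℝ)
    (hint : ∀ f : ℝ[X], Integrable (fun x => f.eval x) μ) : ℝ[X] →ₗ[ℝ] ℝ where
  toFun f := ∫ x, f.eval x ∂μ
  map_add' f g := by simpa only [eval_add] using integral_add (hint f) (hint g)
  map_smul' c f := by
    simpa only [eval_smul, smul_eq_mul, RingHom.id_apply] using
      integral_const_mul c fun x => f.eval x

theorem isPositiveOn_momentFunctional {μ : Measure ℝ}
    (hint : ∀ f : ℝ[X], Integrable (fun x => f.eval x) μ) {s : Set ℝ}
    (hμ : ∀ᵐ x ∂μ, x ∈ s) : IsPositiveOn (momentFunctional μ hint) s :=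
  fun _ hf => integral_nonneg_of_ae (hμ.mono fun x hx => hf x hx)

/-- The measure `dμ_n = K_n(x, x) / (n + 1) dμ` of the paper, where
`K_n(x, x) = ∑ j ≤ n, p_j(x) ^ 2`. -/
noncomputable def christoffelDarbouxMeasure (μ : Measure ℝ) (p : ℕ → ℝ[X]) (n : ℕ) :
    Measure ℝ :=
  μ.withDensity fun x =>
    ENNReal.ofReal ((∑ j ∈ Finset.range (n + 1), (p j).eval x ^ 2) / (n + 1))

theorem integral_christoffelDarbouxMeasure (μ : Measure ℝ) (p : ℕ → ℝ[X]) (n : ℕ)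
    (g : ℝ → ℝ) :
    ∫ x, g x ∂christoffelDarbouxMeasure μ p n =
      (∫ x, g x * ∑ j ∈ Finset.range (n + 1), (p j).eval x ^ 2 ∂μ) / (n + 1) := by
  have hmeas : Measurable fun x => ENNReal.ofReal
      ((∑ j ∈ Finset.range (n + 1), (p j).eval x ^ 2) / (n + 1)) := by
    have (j : ℕ) : Continuous fun x => (p j).eval x := (p j).continuous
    exact ENNReal.measurable_ofReal.comp (Continuous.measurable (by fun_prop))
  rw [christoffelDarbouxMeasure, integral_withDensity_eq_integral_toReal_smul hmeas
    (ae_of_all _ fun _ => ENNReal.ofReal_lt_top), ← integral_div]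
  congr with x
  rw [ENNReal.toReal_ofReal (by positivity), smul_eq_mul]
  ring

section SumDirac

variable {α E : Type*} [MeasurableSpace α] [MeasurableSingletonClass α]
  [NormedAddCommGroup E]

theorem integrable_sum_map_dirac (t : Multiset α) (g : α → E) :
    Integrable g (t.map Measure.dirac).sum := by
  induction t using Multiset.induction with
  | empty => simp
  | cons a t ih => simpa using (integrable_dirac enorm_lt_top).add_measure ih

theorem integral_sum_map_dirac [NormedSpace ℝ E] [CompleteSpace E] (t : Multiset α)
    (g : α → E) : ∫ x, g x ∂(t.map Measure.dirac).sum = (t.map g).sum := by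
  induction t using Multiset.induction with
  | empty => simp
  | cons a t ih =>
    rw [Multiset.map_cons, Multiset.sum_cons, Multiset.map_cons, Multiset.sum_cons,
      integral_add_measure (integrable_dirac enorm_lt_top) (integrable_sum_map_dirac t g),
      integral_dirac, ih]

end SumDirac

/-- The zero-counting measure of `f`, with multiplicities, normalized by the degree of `f`. Only
the real zeros are counted. -/
noncomputable def zeroCountingMeasure (f : ℝ[X]) : Measure ℝ :=
  (f.natDegree : ℝ≥0∞)⁻¹ • (f.roots.map Measure.dirac).sum

theorem integral_zeroCountingMeasure (f : ℝ[X]) (g : ℝ → ℝ) :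
    ∫ x, g x ∂zeroCountingMeasure f = (f.roots.map g).sum / f.natDegree := by
  rw [zeroCountingMeasure, integral_smul_measure, integral_sum_map_dirac, ENNReal.toReal_inv,
    ENNReal.toReal_natCast, smul_eq_mul, inv_mul_eq_div]

end Measures

theorem stmt_2_general (μ : Measure ℝ) [IsFiniteMeasure μ] {a b : ℝ}
    (hsupp : measSupport μ ⊆ Set.Icc a b) (p : Polynomial.Sequence ℝ)
    (horth : ∀ n m, ∫ x, (p n).eval x * (p m).eval x ∂μ = if n = m then 1 else 0)
    {q : ℝ[X]} {B : ℝ} (hq : ∀ x ∈ Set.Icc a b, |q.eval x| ≤ B) (n : ℕ) :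
    |(∫ x, q.eval x ∂christoffelDarbouxMeasure μ p n) -
        ∫ x, q.eval x ∂zeroCountingMeasure (p (n + 1))| ≤ q.natDegree * B / (n + 1) := by
  have hμ : ∀ᵐ x ∂μ, x ∈ Set.Icc a b := ae_mem_of_measSupport_subset hsupp
  have hint : ∀ f : ℝ[X], Integrable (fun x => f.eval x) μ := fun f =>
    integrable_of_ae_mem_isCompact isCompact_Icc hμ f.continuous
  set L := momentFunctional μ hint
  have hp : IsOrthonormalFor L p := fun n m => by
    simpa [L, momentFunctional] using horth n m
  have hCD : ∫ x, q.eval x ∂christoffelDarbouxMeasure μ p n =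
      L (q * ∑ j ∈ Finset.range (n + 1), p j ^ 2) / (n + 1) := by
    rw [integral_christoffelDarbouxMeasure]
    simp [L, momentFunctional, eval_finsetSum]
  have hzeros : ∫ x, q.eval x ∂zeroCountingMeasure (p (n + 1)) =
      ((p (n + 1)).roots.map q.eval).sum / (n + 1) := by
    rw [integral_zeroCountingMeasure, p.natDegree_eq, Nat.cast_succ]
  rw [hCD, hzeros, ← sub_div, abs_div, abs_of_pos (n.cast_add_one_pos (α := ℝ))]
  gcongr
  exact (isPositiveOn_momentFunctional hint hμ).abs_apply_mul_sum_sq_sub_sum_roots_le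
    isPreconnected_Icc hp hq (n + 1)

/-- **Simon's theorem, real line case.** For a probability measure `μ` on `ℝ`
with infinite support contained in `[-M, M]`, with orthonormal polynomials
`p n`, CD kernel `K_n(x,x) = ∑_{j≤n} p_j(x)²`, `dμ_n = (K_n(x,x)/(n+1)) dμ`,
and `ν_{n+1}` the normalized zero-counting measure of `p_{n+1}`, for every
fixed `k` there is a constant `C` (depending only on `k` and `μ`) such that
the `k`-th moments of `μ_n` and `ν_{n+1}` differ by at most `C/(n+1)`. -/
theorem stmt_2
    (μ : Measure ℝ) [IsProbabilityMeasure μ] (M : ℝ)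
    (hsupp : measSupport μ ⊆ Set.Icc (-M) M)
    (hinf : (measSupport μ).Infinite)
    (p : ℕ → Polynomial ℝ)
    (hdeg : ∀ n, (p n).natDegree = n)
    (hlead : ∀ n, 0 < (p n).leadingCoeff)
    (horth : ∀ n m, ∫ x, (p n).eval x * (p m).eval x ∂μ = if n = m then 1 else 0)
    (μn : ℕ → Measure ℝ)
    (hμn : ∀ n, μn n = μ.withDensity (fun x =>
      ENNReal.ofReal ((∑ j ∈ Finset.range (n + 1), ((p j).eval x) ^ 2) / (n + 1))))
    (ν : ℕ → Measure ℝ)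
    (hν : ∀ n, ν n = ((n : ℝ≥0∞) + 1)⁻¹ • (((p (n + 1)).roots).map Measure.dirac).sum)
    (k : ℕ) :
    ∃ C : ℝ, ∀ n : ℕ,
      |(∫ x, x ^ k ∂(μn n)) - ∫ x, x ^ k ∂(ν n)| ≤ C / (n + 1) := by
  have hzero (n : ℕ) : ν n = zeroCountingMeasure (p (n + 1)) := by
    rw [hν, zeroCountingMeasure, hdeg, Nat.cast_succ]
  let S : Polynomial.Sequence ℝ := ⟨p, fun n =>
    (degree_eq_iff_natDegree_eq (leadingCoeff_ne_zero.1 (hlead n).ne')).2 (hdeg n)⟩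
  have hbound : ∀ x ∈ Set.Icc (-M) M, |(X ^ k : ℝ[X]).eval x| ≤ M ^ k := fun x hx => by
    rw [eval_pow, eval_X, abs_pow]
    exact pow_le_pow_left₀ (abs_nonneg x) (abs_le.2 hx) k
  refine ⟨k * M ^ k, fun n => ?_⟩
  simpa [hμn, hzero, christoffelDarbouxMeasure, S] using
    stmt_2_general μ hsupp S horth hbound n
end

section
/- Let μ be a probability measure on ℝ with infinite compact support and orthonormal polynomials {p_n} with positive leading coefficients κ_n, and set a_{n+1} = κ_n/κ_{n+1}. Define dρ_n(x) = dx / (π (a_{n+1}² p_{n+1}(x)² + p_n(x)²)) on ℝ. Then ρ_n is a probability measure on ℝ and ∫_ℝ x^ℓ dρ_n(x) = ∫_ℝ x^ℓ dμ(x) for every integer ℓ with 0 ≤ ℓ ≤ 2n. -/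
open MeasureTheory Polynomial Filter
open scoped ENNReal Real

/-!
Write `P = p n`, `Q = a * p (n + 1)` and `E = Q + i P`, so that `|E|² = P² + Q²` on the real line.
If `E(z) = 0`, divide: `E = (X - z) (u + i v)` with `u`, `v` real. Orthogonality gives
`∫ (u P - v Q) dμ = 1`, while `u P - v Q = -(Im z) (u² + v²)` on `ℝ`; hence `Im z < 0`. So `E` has
no zeros in the closed upper half-plane, and moving the contour there evaluates the integrals of
`f / E` for `deg f ≤ n`. Their real and imaginary parts show that `P` and `Q` satisfy the same
orthogonality relations with respect to `ρ` as with respect to `μ`. Since `E` has no real zeros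
and none in conjugate pairs, `P` and `Q` are coprime, so every polynomial of degree at most `2 n`
is `f P + g Q` with `deg f ≤ n` and `deg g < n`, and those relations determine its integral.
-/

section

open Asymptotics Bornology Complex Topology

/-! ### Polynomials over a field -/

section Field

variable {K : Type*} [Field K] {n : ℕ}

lemma span_image_Iio_eq_degreeLT {p : ℕ → K[X]} (hp : ∀ k < n, (p k).degree = k) :
    Submodule.span K (p '' Set.Iio n) = degreeLT K n := by
  let S : Polynomial.Sequence K :=
    ⟨fun k => if k < n then p k else X ^ k, fun k => by split_ifs with hk <;> simp [hp, hk]⟩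
  have hS : p '' Set.Iio n = S '' Set.Iio n := Set.image_congr fun k hk => (if_pos hk).symm
  rw [hS]
  exact S.span_degreeLT fun k _ => (leadingCoeff_ne_zero.2 (S.ne_zero k)).isUnit

lemma natDegree_mul_X_add_C_sub_le {f g : K[X]} (hf : f.natDegree ≤ n) (hg : g.natDegree = n + 1)
    (w : K) : (f * (X + C w) - C (f.coeff n / g.leadingCoeff) * g).natDegree ≤ n := by
  have hlead : g.leadingCoeff ≠ 0 := leadingCoeff_ne_zero.2 (by rintro rfl; simp at hg)
  have hleft : (f * (X + C w)).natDegree ≤ n + 1 :=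
    natDegree_mul_le.trans (by rw [natDegree_X_add_C]; omega)
  have hright : (C (f.coeff n / g.leadingCoeff) * g).natDegree ≤ n + 1 :=
    (natDegree_C_mul_le _ _).trans hg.le
  refine natDegree_le_pred (n := n + 1)
    ((natDegree_sub_le_of_le hleft hright).trans (max_self _).le) ?_
  have hftop : f.coeff (n + 1) = 0 := coeff_eq_zero_of_natDegree_lt (by omega)
  have hgtop : g.coeff (n + 1) = g.leadingCoeff := by rw [leadingCoeff, hg]
  simp [mul_add, hftop, hgtop, hlead]

theorem exists_eq_mul_add_mul_of_isCoprime {P Q h : K[X]} (hPQ : IsCoprime P Q)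
    (hP : P.degree = n) (hQ : Q.natDegree ≤ n + 1) (hh : h.natDegree ≤ 2 * n) :
    ∃ f g : K[X], h = f * P + g * Q ∧ f.natDegree ≤ n ∧ g.degree < n := by
  have hP0 : P ≠ 0 := by rintro rfl; simp at hP
  obtain ⟨u, v, huv⟩ := hPQ
  set g := h * v % P
  set f := h * u + h * v / P * Q
  have hsum : h = f * P + g * Q := by
    linear_combination (-h) * huv - Q * EuclideanDomain.div_add_mod (h * v) P
  have hg : g.degree < n := hP ▸ degree_mod_lt (h * v) hP0
  refine ⟨f, g, hsum, ?_, hg⟩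
  have hgQ : (g * Q).natDegree ≤ 2 * n := by
    rcases eq_or_ne g 0 with hg0 | hg0
    · simp [hg0]
    · have := (natDegree_lt_iff_degree_lt hg0).2 hg
      exact natDegree_mul_le.trans (by omega)
  have hfP : (f * P).natDegree ≤ 2 * n := by
    rw [eq_sub_of_add_eq hsum.symm]
    exact (natDegree_sub_le_of_le hh hgQ).trans (max_self _).le
  rcases eq_or_ne f 0 with hf0 | hf0
  · simp [hf0]
  · rw [natDegree_mul hf0 hP0, natDegree_eq_of_degree_eq_some hP] at hfP
    omega

end Field

/-! ### Complex polynomials with given real and imaginary parts -/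

/-- The complex polynomial `u + i v`, whose real and imaginary parts on the real line are `u` and
`v`. -/
noncomputable def ofReIm (u v : ℝ[X]) : ℂ[X] :=
  u.map (algebraMap ℝ ℂ) + C I * v.map (algebraMap ℝ ℂ)

section OfReIm

variable {P Q : ℝ[X]} {n : ℕ}

lemma eval_ofReIm (u v : ℝ[X]) (z : ℂ) : (ofReIm u v).eval z = aeval z u + I * aeval z v := by
  simp [ofReIm]

lemma eval_ofReal_ofReIm (u v : ℝ[X]) (x : ℝ) :
    (ofReIm u v).eval (x : ℂ) = ⟨u.eval x, v.eval x⟩ := by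
  simp only [ofReIm, ← coe_algebraMap, eval_add, eval_mul, eval_C, eval_map_apply]
  simp [Complex.ext_iff]

lemma coeff_ofReIm (u v : ℝ[X]) (k : ℕ) : (ofReIm u v).coeff k = ⟨u.coeff k, v.coeff k⟩ := by
  simp [ofReIm, Complex.ext_iff]

lemma exists_eq_ofReIm (g : ℂ[X]) : ∃ u v : ℝ[X], g = ofReIm u v := by
  induction g using Polynomial.induction_on' with
  | add f g hf hg =>
    obtain ⟨u, v, rfl⟩ := hf
    obtain ⟨u', v', rfl⟩ := hg
    exact ⟨u + u', v + v', by simp only [ofReIm, Polynomial.map_add]; ring⟩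
  | monomial k c =>
    exact ⟨monomial k c.re, monomial k c.im, by
      simp [ofReIm, C_mul_monomial, ← map_add, mul_comm I, re_add_im]⟩

lemma natDegree_ofReIm (h : P.natDegree < Q.natDegree) :
    (ofReIm Q P).natDegree = Q.natDegree := by
  rw [ofReIm, natDegree_add_eq_left_of_natDegree_lt, natDegree_map]
  rwa [natDegree_C_mul I_ne_zero, natDegree_map, natDegree_map]

lemma leadingCoeff_ofReIm (h : P.natDegree < Q.natDegree) :
    (ofReIm Q P).leadingCoeff = (Q.leadingCoeff : ℂ) := by
  rw [leadingCoeff, natDegree_ofReIm h, coeff_ofReIm, coeff_eq_zero_of_natDegree_lt h]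
  rfl

lemma exists_ofReIm_eq_X_sub_C_mul (hP : P.natDegree ≤ n) (hQ : Q.natDegree = n + 1) {z : ℂ}
    (hz : (ofReIm Q P).IsRoot z) :
    ∃ u v : ℝ[X], ofReIm Q P = (X - C z) * ofReIm u v ∧
      u.natDegree ≤ n ∧ u.coeff n = Q.leadingCoeff ∧ v.degree < n := by
  have hPQ : P.natDegree < Q.natDegree := by omega
  have hE : (ofReIm Q P).natDegree = n + 1 := (natDegree_ofReIm hPQ).trans hQ
  obtain ⟨u, v, huv⟩ := exists_eq_ofReIm (ofReIm Q P /ₘ (X - C z))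
  have hdeg : (ofReIm u v).natDegree = n := by
    rw [← huv, natDegree_divByMonic _ (monic_X_sub_C z), natDegree_X_sub_C, hE, Nat.add_sub_cancel]
  have hlead : (ofReIm u v).coeff n = (Q.leadingCoeff : ℂ) := by
    rw [← leadingCoeff_ofReIm hPQ, ← leadingCoeff_divByMonic_X_sub_C _ _ z, huv, leadingCoeff, hdeg]
    exact (natDegree_pos_iff_degree_pos.1 (by omega)).ne'
  have hcoeff (k : ℕ) (hk : n < k) : u.coeff k = 0 ∧ v.coeff k = 0 := by
    simpa [coeff_ofReIm, Complex.ext_iff] using coeff_eq_zero_of_natDegree_lt (hdeg.trans_lt hk)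
  rw [coeff_ofReIm, Complex.ext_iff] at hlead
  refine ⟨u, v, ?_, natDegree_le_iff_coeff_eq_zero.2 fun k hk => (hcoeff k hk).1, hlead.1,
    (degree_lt_iff_coeff_zero _ _).2 fun k hk => ?_⟩
  · rw [← huv, mul_divByMonic_eq_iff_isRoot.2 hz]
  · rcases hk.eq_or_lt with rfl | hk
    exacts [hlead.2, (hcoeff k hk).2]

lemma isCoprime_of_eval_ofReIm_ne_zero (hE : ∀ z : ℂ, 0 ≤ z.im → (ofReIm Q P).eval z ≠ 0) :
    IsCoprime P Q := by
  have hupper (z : ℂ) (hz : 0 ≤ z.im) : aeval z P ≠ 0 ∨ aeval z Q ≠ 0 := by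
    by_contra! h
    exact hE z hz (by simp [eval_ofReIm, h.1, h.2])
  rw [isCoprime_iff_aeval_ne_zero_of_isAlgClosed ℝ ℂ]
  intro z
  rcases le_total 0 z.im with hz | hz
  · exact hupper z hz
  · simpa [aeval_conj] using hupper (starRingEnd ℂ z) (by simpa using hz)

end OfReIm

/-! ### Integrals of rational functions without poles in the closed upper half-plane -/

lemma norm_intervalIntegral_le_of_norm_le {F : ℂ → ℂ} {R M : ℝ} (hR : 0 < R)
    (hF : DifferentiableOn ℂ F {z | 0 ≤ z.im})
    (hM : ∀ z : ℂ, 0 ≤ z.im → R ≤ ‖z‖ → ‖F z‖ ≤ M) :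
    ‖∫ x in (-R)..R, F x‖ ≤ 4 * R * M := by
  have hrect := integral_boundary_rect_eq_zero_of_differentiableOn F (-R) (R + R * I) <|
    hF.mono fun z hz => by
      have : z.im ∈ Set.uIcc 0 R := by simpa using hz.2
      exact (Set.uIcc_of_le hR.le ▸ this).1
  have htop : ‖∫ x in (-R)..R, F (x + R * I)‖ ≤ M * |R - -R| :=
    intervalIntegral.norm_integral_le_of_norm_le_const fun x _ =>
      hM _ (by simp [hR.le]) (by simpa [abs_of_pos hR] using abs_im_le_norm (x + R * I))
  have hside (s : ℝ) (hs : |s| = R) : ‖∫ y in (0 : ℝ)..R, F (s + y * I)‖ ≤ M * |R - 0| :=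
    intervalIntegral.norm_integral_le_of_norm_le_const fun y hy =>
      hM _ (by simpa using (Set.uIoc_of_le hR.le ▸ hy).1.le)
        (by simpa [hs] using abs_re_le_norm (s + y * I))
  have hright := hside R (abs_of_pos hR)
  have hleft := hside (-R) (by rw [abs_neg, abs_of_pos hR])
  rw [sub_neg_eq_add, abs_of_pos (by positivity)] at htop
  rw [sub_zero, abs_of_pos hR] at hright hleft
  have hsplit : ∫ x in (-R)..R, F x = (∫ x in (-R)..R, F (x + R * I)) -
      I * (∫ y in (0 : ℝ)..R, F (R + y * I)) + I * ∫ y in (0 : ℝ)..R, F ((-R : ℝ) + y * I) := by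
    simp only [neg_re, neg_im, ofReal_re, ofReal_im, add_re, add_im, mul_re, mul_im, I_re, I_im,
      mul_zero, mul_one, zero_mul, add_zero, zero_add, neg_zero, sub_self, ofReal_zero,
      smul_eq_mul] at hrect
    linear_combination hrect
  calc ‖∫ x in (-R)..R, F x‖
      ≤ ‖∫ x in (-R)..R, F (x + R * I)‖ + ‖∫ y in (0 : ℝ)..R, F (R + y * I)‖
        + ‖∫ y in (0 : ℝ)..R, F ((-R : ℝ) + y * I)‖ := by
        rw [hsplit]
        refine (norm_add_le _ _).trans (add_le_add ((norm_sub_le _ _).trans ?_) ?_) <;> simp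
    _ ≤ 4 * R * M := by linarith

theorem tendsto_intervalIntegral_of_isLittleO_inv {F : ℂ → ℂ}
    (hF : DifferentiableOn ℂ F {z | 0 ≤ z.im})
    (hdecay : F =o[cobounded ℂ ⊓ 𝓟 {z | 0 ≤ z.im}] fun z => z⁻¹) :
    Tendsto (fun R : ℝ => ∫ x in (-R)..R, F x) atTop (𝓝 0) := by
  rw [NormedAddGroup.tendsto_nhds_zero]
  intro ε hε
  obtain ⟨R₀, -, hR₀⟩ := (hasBasis_cobounded_norm.inf_principal _).eventually_iff.1
    (hdecay.bound (show 0 < ε / 8 by positivity))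
  filter_upwards [eventually_ge_atTop R₀, eventually_gt_atTop 0] with R hR hRpos
  have hM (z : ℂ) (hz : 0 ≤ z.im) (hRz : R ≤ ‖z‖) : ‖F z‖ ≤ ε / 8 * R⁻¹ :=
    (hR₀ ⟨hR.trans hRz, hz⟩).trans (by rw [norm_inv]; gcongr)
  calc ‖∫ x in (-R)..R, F x‖ ≤ 4 * R * (ε / 8 * R⁻¹) :=
        norm_intervalIntegral_le_of_norm_le hRpos hF hM
    _ = ε / 2 := by field_simp; norm_num
    _ < ε := half_lt_self hε

section RationalFunction

variable {f g : ℂ[X]} {n : ℕ}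

lemma integrable_eval_div_eval (hdeg : f.natDegree + 2 ≤ g.natDegree)
    (hg : ∀ x : ℝ, g.eval (x : ℂ) ≠ 0) :
    Integrable fun x : ℝ => f.eval (x : ℂ) / g.eval (x : ℂ) := by
  have hcont : Continuous fun x : ℝ => f.eval (x : ℂ) / g.eval (x : ℂ) :=
    (f.continuous.comp continuous_ofReal).div (g.continuous.comp continuous_ofReal) hg
  have hO : ((1 + X ^ 2) * f).eval =O[cobounded ℂ] g.eval := by
    have hg0 : g ≠ 0 := by rintro rfl; simp at hdeg
    have hquad : (1 + X ^ 2 : ℂ[X]).natDegree ≤ 2 := by compute_degree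
    refine isBigO_cobounded_of_degree_le ?_
    rw [degree_eq_natDegree hg0, ← natDegree_le_iff_degree_le]
    calc ((1 + X ^ 2) * f).natDegree ≤ 2 + f.natDegree := natDegree_mul_le_of_le hquad le_rfl
      _ ≤ g.natDegree := by omega
  obtain ⟨K, hK⟩ := (hO.comp_tendsto (RCLike.tendsto_ofReal_cobounded_cobounded ℂ)).bound
  rw [Metric.cobounded_eq_cocompact] at hK
  refine hcont.locallyIntegrable.integrable_of_isBigO_cocompact (.of_bound K ?_)
    (integrable_inv_one_add_sq.integrableAtFilter _)
  filter_upwards [hK] with x hx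
  have hnorm : ‖(1 + (x : ℂ) ^ 2)‖ = 1 + x ^ 2 := by
    rw [← ofReal_pow, ← ofReal_one, ← ofReal_add, norm_real, Real.norm_of_nonneg (by positivity)]
  simp only [Function.comp_apply, eval_mul, norm_mul, eval_add, eval_one, eval_pow, eval_X,
    RCLike.ofReal_eq_complex_ofReal, hnorm] at hx
  rw [norm_div, div_le_iff₀ (norm_pos_iff.2 (hg x)), Real.norm_of_nonneg (by positivity)]
  field_simp
  linarith

theorem integral_eval_div_eval_eq_zero (hdeg : f.natDegree + 2 ≤ g.natDegree)
    (hg : ∀ z : ℂ, 0 ≤ z.im → g.eval z ≠ 0) :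
    ∫ x : ℝ, f.eval (x : ℂ) / g.eval (x : ℂ) = 0 := by
  have hdiff : DifferentiableOn ℂ (fun z => f.eval z / g.eval z) {z | 0 ≤ z.im} :=
    f.differentiable.differentiableOn.div g.differentiable.differentiableOn hg
  have ho : (X * f).eval =o[cobounded ℂ] g.eval := by
    refine isLittleO_cobounded_of_degree_lt (degree_lt_degree ?_)
    exact natDegree_mul_le.trans_lt (by rw [natDegree_X]; omega)
  have hdecay : (fun z => f.eval z / g.eval z) =o[cobounded ℂ] fun z => z⁻¹ := by
    refine isLittleO_of_tendsto' ?_ (ho.tendsto_div_nhds_zero.congr fun z => ?_)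
    · filter_upwards [eventually_ne_cobounded 0] with z hz hz' using absurd hz' (inv_ne_zero hz)
    · rw [eval_mul, eval_X, div_inv_eq_mul, mul_comm z, mul_div_right_comm]
  have hint := integrable_eval_div_eval hdeg fun x => hg x (by simp)
  exact tendsto_nhds_unique
    (intervalIntegral_tendsto_integral hint tendsto_neg_atTop_atBot tendsto_id)
    (tendsto_intervalIntegral_of_isLittleO_inv hdiff (hdecay.mono inf_le_left))

-- The multiple of `1 / (x + i)` removes the part of order `1 / x`, without adding a pole in the
-- closed upper half-plane.
theorem integrable_and_integral_eval_div_eval_sub (hf : f.natDegree ≤ n)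
    (hgdeg : g.natDegree = n + 1) (hg : ∀ z : ℂ, 0 ≤ z.im → g.eval z ≠ 0) :
    Integrable (fun x : ℝ => f.eval (x : ℂ) / g.eval (x : ℂ) -
      f.coeff n / g.leadingCoeff / (x + I)) ∧
    ∫ x : ℝ, (f.eval (x : ℂ) / g.eval (x : ℂ) - f.coeff n / g.leadingCoeff / (x + I)) = 0 := by
  set c := f.coeff n / g.leadingCoeff
  have hXI (z : ℂ) (hz : 0 ≤ z.im) : z + I ≠ 0 := fun h => by
    have him : (z + I).im = 0 := by rw [h, zero_im]
    rw [add_im, I_im] at him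
    linarith
  have hden (z : ℂ) (hz : 0 ≤ z.im) : ((X + C I) * g).eval z ≠ 0 := by
    simpa using ⟨hXI z hz, hg z hz⟩
  have hdeg : (f * (X + C I) - C c * g).natDegree + 2 ≤ ((X + C I) * g).natDegree := by
    have hnum : (f * (X + C I) - C c * g).natDegree ≤ n :=
      natDegree_mul_X_add_C_sub_le hf hgdeg I
    have hg0 : g ≠ 0 := by rintro rfl; simp at hgdeg
    rw [natDegree_mul (X_add_C_ne_zero I) hg0, natDegree_X_add_C]
    omega
  have hcombine (x : ℝ) : f.eval (x : ℂ) / g.eval (x : ℂ) - c / (x + I) =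
      (f * (X + C I) - C c * g).eval (x : ℂ) / ((X + C I) * g).eval (x : ℂ) := by
    have := hg x (by simp)
    have := hXI x (by simp)
    simp only [eval_sub, eval_mul, eval_add, eval_X, eval_C]
    field_simp
  simp_rw [hcombine]
  exact ⟨integrable_eval_div_eval hdeg fun x => hden x (by simp),
    integral_eval_div_eval_eq_zero hdeg hden⟩

end RationalFunction

/-! ### Quasi-orthogonal pairs -/

/-- `Q` (of degree `n + 1` in all applications) is orthogonal to all polynomials of degree `< n`,
and integration against `P` reads off the coefficient of degree `n` of a polynomial of degree
`≤ n`, in units of the leading coefficient of `Q`.  For orthonormal polynomials `p` this holds with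
`P = p n` and `Q = a * p (n + 1)`; it is the part of orthonormality that passes to the
Bernstein–Szegő measure.  Integrability is required separately because the integral of a
non-integrable function is `0`. -/
structure IsQuasiOrthogonalPair (σ : Measure ℝ) (n : ℕ) (P Q : ℝ[X]) : Prop where
  integrable_left : ∀ f : ℝ[X], f.natDegree ≤ n → Integrable (fun x => f.eval x * P.eval x) σ
  integral_left : ∀ f : ℝ[X], f.natDegree ≤ n →
    ∫ x, f.eval x * P.eval x ∂σ = f.coeff n / Q.leadingCoeff
  integrable_right : ∀ g : ℝ[X], g.degree < n → Integrable (fun x => g.eval x * Q.eval x) σ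
  integral_right : ∀ g : ℝ[X], g.degree < n → ∫ x, g.eval x * Q.eval x ∂σ = 0

namespace IsQuasiOrthogonalPair

variable {σ τ : Measure ℝ} {P Q h : ℝ[X]} {n : ℕ}

theorem im_neg_of_isRoot (hσ : IsQuasiOrthogonalPair σ n P Q) (hP : P.natDegree ≤ n)
    (hQ : Q.natDegree = n + 1) {z : ℂ} (hz : (ofReIm Q P).IsRoot z) : z.im < 0 := by
  have hQ0 : Q.leadingCoeff ≠ 0 := leadingCoeff_ne_zero.2 (by rintro rfl; simp at hQ)
  obtain ⟨u, v, hE, hu, hlead, hv⟩ := exists_ofReIm_eq_X_sub_C_mul hP hQ hz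
  have hpoint (x : ℝ) : u.eval x * P.eval x - v.eval x * Q.eval x =
      -z.im * (u.eval x ^ 2 + v.eval x ^ 2) := by
    have h := congrArg (eval (x : ℂ)) hE
    simp only [eval_ofReal_ofReIm, eval_mul, eval_sub, eval_X, eval_C, Complex.ext_iff, mul_re,
      mul_im, sub_re, sub_im, ofReal_re, ofReal_im] at h
    rw [h.1, h.2]
    ring
  have hone : -z.im * ∫ x, (u.eval x ^ 2 + v.eval x ^ 2) ∂σ = 1 := by
    simp_rw [← integral_const_mul, ← hpoint]
    rw [integral_sub (hσ.integrable_left u hu) (hσ.integrable_right v hv), hσ.integral_left u hu,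
      hσ.integral_right v hv, sub_zero, hlead, div_self hQ0]
  have hnonneg : 0 ≤ ∫ x, (u.eval x ^ 2 + v.eval x ^ 2) ∂σ :=
    integral_nonneg fun x => by positivity
  nlinarith

lemma eval_ofReIm_ne_zero (hσ : IsQuasiOrthogonalPair σ n P Q) (hP : P.natDegree ≤ n)
    (hQ : Q.natDegree = n + 1) (z : ℂ) (hz : 0 ≤ z.im) : (ofReIm Q P).eval z ≠ 0 :=
  fun hroot => (hσ.im_neg_of_isRoot hP hQ hroot).not_ge hz

lemma isCoprime (hσ : IsQuasiOrthogonalPair σ n P Q) (hP : P.natDegree ≤ n)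
    (hQ : Q.natDegree = n + 1) : IsCoprime P Q :=
  isCoprime_of_eval_ofReIm_ne_zero (hσ.eval_ofReIm_ne_zero hP hQ)

lemma integral_mul_add_mul (hσ : IsQuasiOrthogonalPair σ n P Q) {f g : ℝ[X]}
    (hf : f.natDegree ≤ n) (hg : g.degree < n) :
    ∫ x, (f * P + g * Q).eval x ∂σ = f.coeff n / Q.leadingCoeff := by
  simp only [eval_add, eval_mul]
  rw [integral_add (hσ.integrable_left f hf) (hσ.integrable_right g hg), hσ.integral_left f hf,
    hσ.integral_right g hg, add_zero]

lemma integrable_eval (hσ : IsQuasiOrthogonalPair σ n P Q) (hP : P.degree = n)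
    (hQ : Q.natDegree = n + 1) (hh : h.natDegree ≤ 2 * n) : Integrable (fun x => h.eval x) σ := by
  have hPQ := hσ.isCoprime (natDegree_le_of_degree_le hP.le) hQ
  obtain ⟨f, g, rfl, hf, hg⟩ := exists_eq_mul_add_mul_of_isCoprime hPQ hP hQ.le hh
  simpa [Pi.add_def] using (hσ.integrable_left f hf).add (hσ.integrable_right g hg)

theorem integral_eval_eq (hσ : IsQuasiOrthogonalPair σ n P Q)
    (hτ : IsQuasiOrthogonalPair τ n P Q) (hP : P.degree = n) (hQ : Q.natDegree = n + 1)
    (hh : h.natDegree ≤ 2 * n) : ∫ x, h.eval x ∂σ = ∫ x, h.eval x ∂τ := by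
  have hPQ := hσ.isCoprime (natDegree_le_of_degree_le hP.le) hQ
  obtain ⟨f, g, rfl, hf, hg⟩ := exists_eq_mul_add_mul_of_isCoprime hPQ hP hQ.le hh
  rw [hσ.integral_mul_add_mul hf hg, hτ.integral_mul_add_mul hf hg]

theorem isProbabilityMeasure (hσ : IsQuasiOrthogonalPair σ n P Q)
    (hτ : IsQuasiOrthogonalPair τ n P Q) (hP : P.degree = n) (hQ : Q.natDegree = n + 1)
    [IsProbabilityMeasure τ] : IsProbabilityMeasure σ := by
  have : IsFiniteMeasure σ := by
    simpa [integrable_const_iff] using hσ.integrable_eval hP hQ (h := 1) (by simp)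
  have hmass := hσ.integral_eval_eq hτ hP hQ (h := 1) (by simp)
  exact isProbabilityMeasure_iff_real.2 (by simpa using hmass)

end IsQuasiOrthogonalPair

/-! ### Bernstein–Szegő measures -/

/-- The Bernstein–Szegő measure `dx / (π (P(x)² + Q(x)²))`. At a common real zero of `P` and `Q`
the density takes the value `0`, by the convention `0⁻¹ = 0`. -/
noncomputable def bernsteinSzego (P Q : ℝ[X]) : Measure ℝ :=
  volume.withDensity fun x => ENNReal.ofReal (π * (Q.eval x ^ 2 + P.eval x ^ 2))⁻¹

section BernsteinSzego

variable {P Q : ℝ[X]} {n : ℕ}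

lemma integrable_bernsteinSzego_iff {f : ℝ → ℝ} : Integrable f (bernsteinSzego P Q) ↔
    Integrable fun x => π⁻¹ * (f x / (Q.eval x ^ 2 + P.eval x ^ 2)) := by
  rw [bernsteinSzego, integrable_withDensity_iff_integrable_smul' (by fun_prop) (by simp)]
  refine integrable_congr (.of_forall fun x => ?_)
  simp only [smul_eq_mul]
  rw [ENNReal.toReal_ofReal (by positivity), mul_inv]
  ring

lemma integral_bernsteinSzego (f : ℝ → ℝ) : ∫ x, f x ∂(bernsteinSzego P Q) =
    π⁻¹ * ∫ x, f x / (Q.eval x ^ 2 + P.eval x ^ 2) := by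
  rw [bernsteinSzego, integral_withDensity_eq_integral_toReal_smul (by fun_prop) (by simp),
    ← integral_const_mul]
  refine integral_congr_ae (.of_forall fun x => ?_)
  simp only [smul_eq_mul]
  rw [ENNReal.toReal_ofReal (by positivity), mul_inv]
  ring

lemma re_ofReal_div_eval_ofReIm (t x : ℝ) :
    ((t : ℂ) / (ofReIm Q P).eval (x : ℂ)).re = t * Q.eval x / (Q.eval x ^ 2 + P.eval x ^ 2) := by
  simp [eval_ofReal_ofReIm, div_re, normSq_apply, sq]

lemma im_ofReal_div_eval_ofReIm (t x : ℝ) :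
    ((t : ℂ) / (ofReIm Q P).eval (x : ℂ)).im = -(t * P.eval x / (Q.eval x ^ 2 + P.eval x ^ 2)) := by
  simp [eval_ofReal_ofReIm, div_im, normSq_apply, sq]

lemma integrable_and_integral_ofReal_eval_div_eval_ofReIm (hP : P.natDegree ≤ n)
    (hQ : Q.natDegree = n + 1) (hE : ∀ z : ℂ, 0 ≤ z.im → (ofReIm Q P).eval z ≠ 0)
    {f : ℝ[X]} (hf : f.natDegree ≤ n) :
    Integrable (fun x : ℝ => ((f.eval x : ℝ) : ℂ) / (ofReIm Q P).eval (x : ℂ) -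
      (f.coeff n / Q.leadingCoeff : ℝ) / (x + I)) ∧
    ∫ x : ℝ, (((f.eval x : ℝ) : ℂ) / (ofReIm Q P).eval (x : ℂ) -
      (f.coeff n / Q.leadingCoeff : ℝ) / (x + I)) = 0 := by
  have hPQ : P.natDegree < Q.natDegree := by omega
  have hdeg : (ofReIm Q P).natDegree = n + 1 := (natDegree_ofReIm hPQ).trans hQ
  have h := integrable_and_integral_eval_div_eval_sub
    (f := f.map (algebraMap ℝ ℂ)) (natDegree_map_le.trans hf) hdeg hE
  simpa [leadingCoeff_ofReIm hPQ, -eval_map_algebraMap, ← coe_algebraMap, eval_map_apply] using h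

-- The value is the imaginary part of `∫ c / (x + i)`, up to sign.
lemma integrable_and_integral_mul_left_div (hP : P.natDegree ≤ n)
    (hQ : Q.natDegree = n + 1) (hE : ∀ z : ℂ, 0 ≤ z.im → (ofReIm Q P).eval z ≠ 0)
    {f : ℝ[X]} (hf : f.natDegree ≤ n) :
    Integrable (fun x => f.eval x * P.eval x / (Q.eval x ^ 2 + P.eval x ^ 2)) ∧
    ∫ x, f.eval x * P.eval x / (Q.eval x ^ 2 + P.eval x ^ 2) =
      π * (f.coeff n / Q.leadingCoeff) := by
  obtain ⟨hint, hzero⟩ := integrable_and_integral_ofReal_eval_div_eval_ofReIm hP hQ hE hf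
  set c : ℝ := f.coeff n / Q.leadingCoeff
  have him (x : ℝ) : f.eval x * P.eval x / (Q.eval x ^ 2 + P.eval x ^ 2) =
      c * (1 + x ^ 2)⁻¹ - im (((f.eval x : ℝ) : ℂ) / (ofReIm Q P).eval (x : ℂ) - c / (x + I)) := by
    have hcauchy_im : im (c / (x + I) : ℂ) = -(c * (1 + x ^ 2)⁻¹) := by
      simp [normSq_apply, div_eq_mul_inv, sq, add_comm]
    rw [sub_im, im_ofReal_div_eval_ofReIm, hcauchy_im]
    ring
  have hcauchy : Integrable fun x : ℝ => c * (1 + x ^ 2)⁻¹ := integrable_inv_one_add_sq.const_mul c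
  have hint_im : Integrable fun x : ℝ =>
      im (((f.eval x : ℝ) : ℂ) / (ofReIm Q P).eval (x : ℂ) - c / (x + I)) := hint.im
  have hzero_im :
      ∫ x : ℝ, im (((f.eval x : ℝ) : ℂ) / (ofReIm Q P).eval (x : ℂ) - c / (x + I)) = 0 := by
    simpa [hzero] using integral_im hint
  simp_rw [him]
  refine ⟨hcauchy.sub hint_im, ?_⟩
  rw [integral_sub hcauchy hint_im, hzero_im, integral_const_mul, integral_univ_inv_one_add_sq,
    sub_zero, mul_comm]

lemma integrable_and_integral_mul_right_div (hP : P.natDegree ≤ n)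
    (hQ : Q.natDegree = n + 1) (hE : ∀ z : ℂ, 0 ≤ z.im → (ofReIm Q P).eval z ≠ 0)
    {g : ℝ[X]} (hg : g.degree < n) :
    Integrable (fun x => g.eval x * Q.eval x / (Q.eval x ^ 2 + P.eval x ^ 2)) ∧
    ∫ x, g.eval x * Q.eval x / (Q.eval x ^ 2 + P.eval x ^ 2) = 0 := by
  obtain ⟨hint, hzero⟩ := integrable_and_integral_ofReal_eval_div_eval_ofReIm hP hQ hE
    (natDegree_le_of_degree_le hg.le)
  simp only [coeff_eq_zero_of_degree_lt hg, zero_div, ofReal_zero, sub_zero] at hint hzero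
  simp_rw [← re_ofReal_div_eval_ofReIm]
  exact ⟨hint.re, by simpa [hzero] using integral_re hint⟩

theorem isQuasiOrthogonalPair_bernsteinSzego (hP : P.natDegree ≤ n)
    (hQ : Q.natDegree = n + 1) (hE : ∀ z : ℂ, 0 ≤ z.im → (ofReIm Q P).eval z ≠ 0) :
    IsQuasiOrthogonalPair (bernsteinSzego P Q) n P Q where
  integrable_left _ hf := integrable_bernsteinSzego_iff.2
    ((integrable_and_integral_mul_left_div hP hQ hE hf).1.const_mul _)
  integral_left _ hf := by
    rw [integral_bernsteinSzego, (integrable_and_integral_mul_left_div hP hQ hE hf).2,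
      inv_mul_cancel_left₀ Real.pi_ne_zero]
  integrable_right _ hg := integrable_bernsteinSzego_iff.2
    ((integrable_and_integral_mul_right_div hP hQ hE hg).1.const_mul _)
  integral_right _ hg := by
    rw [integral_bernsteinSzego, (integrable_and_integral_mul_right_div hP hQ hE hg).2, mul_zero]

end BernsteinSzego

/-! ### Orthonormal polynomials -/

/-- The polynomials `p 0, …, p N` have degrees `0, …, N` and are orthonormal in `L²(μ)`; nothing is
said about the later members of the sequence. -/
structure IsOrthonormalUpTo (μ : Measure ℝ) (p : ℕ → ℝ[X]) (N : ℕ) : Prop where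
  natDegree_eq : ∀ k ≤ N, (p k).natDegree = k
  integral_mul : ∀ k ≤ N, ∀ l ≤ N,
    ∫ x, (p k).eval x * (p l).eval x ∂μ = if k = l then 1 else 0

namespace IsOrthonormalUpTo

variable {μ : Measure ℝ} {p : ℕ → ℝ[X]} {N k n : ℕ} {f g : ℝ[X]}

lemma integral_sq (hp : IsOrthonormalUpTo μ p N) (hk : k ≤ N) :
    ∫ x, (p k).eval x ^ 2 ∂μ = 1 := by
  simpa [sq] using hp.integral_mul k hk k hk

lemma ne_zero (hp : IsOrthonormalUpTo μ p N) (hk : k ≤ N) : p k ≠ 0 := by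
  intro h
  simpa [h] using hp.integral_sq hk

lemma leadingCoeff_ne_zero (hp : IsOrthonormalUpTo μ p N) (hk : k ≤ N) :
    (p k).leadingCoeff ≠ 0 :=
  Polynomial.leadingCoeff_ne_zero.2 (hp.ne_zero hk)

lemma degree_eq (hp : IsOrthonormalUpTo μ p N) (hk : k ≤ N) : (p k).degree = k := by
  rw [degree_eq_natDegree (hp.ne_zero hk), hp.natDegree_eq k hk]

lemma mem_span (hp : IsOrthonormalUpTo μ p N) (hk : k ≤ N + 1) (hf : f.degree < k) :
    f ∈ Submodule.span ℝ (p '' Set.Iio k) := by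
  rw [span_image_Iio_eq_degreeLT fun j hj => hp.degree_eq (by omega)]
  exact mem_degreeLT.2 hf

-- A function with a nonzero integral is integrable, so `∫ (p k)² = 1` already puts `p k` in `L²`.
lemma memLp (hp : IsOrthonormalUpTo μ p N) (hf : f.natDegree ≤ N) :
    MemLp (fun x => f.eval x) 2 μ := by
  have hspan := hp.mem_span le_rfl
    (degree_le_natDegree.trans_lt (Nat.cast_lt.2 (Nat.lt_succ_of_le hf)))
  clear hf
  induction hspan using Submodule.span_induction with
  | mem _ h =>
    obtain ⟨k, hk, rfl⟩ := h
    refine (memLp_two_iff_integrable_sq (p k).continuous.aestronglyMeasurable).2 ?_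
    exact .of_integral_ne_zero (by simp [hp.integral_sq (Nat.le_of_lt_succ hk)])
  | zero => simp
  | add f g _ _ hf hg => simpa [Pi.add_def] using hf.add hg
  | smul c f _ hf => simpa using hf.const_mul c

lemma integrable_mul (hp : IsOrthonormalUpTo μ p N) (hf : f.natDegree ≤ N)
    (hg : g.natDegree ≤ N) : Integrable (fun x => f.eval x * g.eval x) μ :=
  (hp.memLp hf).integrable_mul (hp.memLp hg)

lemma integral_mul_eq_zero (hp : IsOrthonormalUpTo μ p N) (hk : k ≤ N) (hf : f.degree < k) :
    ∫ x, f.eval x * (p k).eval x ∂μ = 0 := by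
  have hspan := hp.mem_span (hk.trans N.le_succ) hf
  clear hf
  suffices Integrable (fun x => f.eval x * (p k).eval x) μ ∧
      ∫ x, f.eval x * (p k).eval x ∂μ = 0 from this.2
  induction hspan using Submodule.span_induction with
  | mem _ h =>
    obtain ⟨j, hj : j < k, rfl⟩ := h
    have hjN : j ≤ N := hj.le.trans hk
    exact ⟨hp.integrable_mul ((hp.natDegree_eq j hjN).trans_le hjN)
      ((hp.natDegree_eq k hk).trans_le hk), (hp.integral_mul j hjN k hk).trans (if_neg hj.ne)⟩
  | zero => simp
  | add f g _ _ hf hg =>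
    simp only [eval_add, add_mul]
    exact ⟨hf.1.add hg.1, by rw [integral_add hf.1 hg.1, hf.2, hg.2, add_zero]⟩
  | smul c f _ hf =>
    simp only [eval_smul, smul_eq_mul, mul_assoc]
    exact ⟨hf.1.const_mul c, by rw [integral_const_mul, hf.2, mul_zero]⟩

lemma integral_mul_eq_coeff_div (hp : IsOrthonormalUpTo μ p N) (hk : k ≤ N)
    (hf : f.natDegree ≤ k) :
    ∫ x, f.eval x * (p k).eval x ∂μ = f.coeff k / (p k).leadingCoeff := by
  set c := f.coeff k / (p k).leadingCoeff
  have hpk := hp.natDegree_eq k hk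
  have hrem : (f - C c * p k).degree < k := by
    refine (degree_lt_iff_coeff_zero _ _).2 fun j hj => ?_
    rw [coeff_sub, coeff_C_mul]
    rcases hj.eq_or_lt with rfl | hj
    · have htop : (p k).coeff k = (p k).leadingCoeff := by rw [leadingCoeff, hpk]
      rw [htop, div_mul_cancel₀ _ (hp.leadingCoeff_ne_zero hk), sub_self]
    · rw [coeff_eq_zero_of_natDegree_lt (hf.trans_lt hj),
        coeff_eq_zero_of_natDegree_lt (hpk.trans_lt hj), mul_zero, sub_zero]
  have hsplit (x : ℝ) : f.eval x * (p k).eval x =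
      (f - C c * p k).eval x * (p k).eval x + c * (p k).eval x ^ 2 := by
    simp only [eval_sub, eval_mul, eval_C]
    ring
  simp_rw [hsplit]
  rw [integral_add, hp.integral_mul_eq_zero hk hrem, integral_const_mul, hp.integral_sq hk,
    zero_add, mul_one]
  · exact hp.integrable_mul (natDegree_le_of_degree_le (hrem.le.trans (by simpa))) (by omega)
  · exact (hp.memLp (by omega)).integrable_sq.const_mul c

theorem isQuasiOrthogonalPair (hp : IsOrthonormalUpTo μ p (n + 1)) :
    IsQuasiOrthogonalPair μ n (p n)
      (C ((p n).leadingCoeff / (p (n + 1)).leadingCoeff) * p (n + 1)) := by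
  set a := (p n).leadingCoeff / (p (n + 1)).leadingCoeff
  have hlead : (C a * p (n + 1)).leadingCoeff = (p n).leadingCoeff := by
    rw [leadingCoeff_mul, leadingCoeff_C, div_mul_cancel₀ _ (hp.leadingCoeff_ne_zero le_rfl)]
  have hcomm (g : ℝ[X]) (x : ℝ) :
      g.eval x * (C a * p (n + 1)).eval x = a * (g.eval x * (p (n + 1)).eval x) := by
    rw [eval_mul, eval_C, mul_left_comm]
  have hpn := hp.natDegree_eq n n.le_succ
  have hpn1 := hp.natDegree_eq (n + 1) le_rfl
  refine ⟨fun f hf => hp.integrable_mul (by omega) (by omega), fun f hf => ?_, fun g hg => ?_,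
    fun g hg => ?_⟩
  · rw [hlead, hp.integral_mul_eq_coeff_div n.le_succ hf]
  · simp_rw [hcomm]
    have := natDegree_le_of_degree_le hg.le
    exact (hp.integrable_mul (by omega) hpn1.le).const_mul a
  · simp_rw [hcomm]
    rw [integral_const_mul, hp.integral_mul_eq_zero le_rfl, mul_zero]
    exact hg.trans (Nat.cast_lt.2 n.lt_succ_self)

end IsOrthonormalUpTo

end

theorem stmt_7_general (μ : Measure ℝ) [IsProbabilityMeasure μ] (p : ℕ → ℝ[X]) (n : ℕ)
    (hp : IsOrthonormalUpTo μ p (n + 1)) (a : ℝ)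
    (ha : a = (p n).leadingCoeff / (p (n + 1)).leadingCoeff) (ρ : Measure ℝ)
    (hρ : ρ = volume.withDensity fun x => ENNReal.ofReal
      (π * (a ^ 2 * (p (n + 1)).eval x ^ 2 + (p n).eval x ^ 2))⁻¹) :
    IsProbabilityMeasure ρ ∧ ∀ ℓ ≤ 2 * n, ∫ x, x ^ ℓ ∂ρ = ∫ x, x ^ ℓ ∂μ := by
  set P := p n
  set Q := C a * p (n + 1)
  have hP : P.degree = n := hp.degree_eq n.le_succ
  have hP' : P.natDegree ≤ n := natDegree_le_of_degree_le hP.le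
  have hQ : Q.natDegree = n + 1 := by
    have ha0 : a ≠ 0 := ha ▸ div_ne_zero (hp.leadingCoeff_ne_zero n.le_succ)
      (hp.leadingCoeff_ne_zero le_rfl)
    rw [natDegree_C_mul ha0, hp.natDegree_eq _ le_rfl]
  have hμPQ : IsQuasiOrthogonalPair μ n P Q := by
    simpa only [Q, ha] using hp.isQuasiOrthogonalPair
  have hρPQ : IsQuasiOrthogonalPair ρ n P Q := by
    have hρ_eq : ρ = bernsteinSzego P Q := by
      simp only [hρ, bernsteinSzego, Q, eval_mul, eval_C, mul_pow]
    exact hρ_eq ▸ isQuasiOrthogonalPair_bernsteinSzego hP' hQ (hμPQ.eval_ofReIm_ne_zero hP' hQ)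
  refine ⟨hρPQ.isProbabilityMeasure hμPQ hP hQ, fun ℓ hℓ => ?_⟩
  simpa using hρPQ.integral_eval_eq hμPQ hP hQ (h := X ^ ℓ) (by simpa)

/-- For a probability measure `μ` on `ℝ` with infinite compact support,
orthonormal polynomials `p n` with leading coefficients `κ_n`, and
`a_{n+1} = κ_n / κ_{n+1}`, the measure
`dρ_n = dx / (π (a_{n+1}² p_{n+1}(x)² + p_n(x)²))` is a probability measure
whose moments of order `0 ≤ ℓ ≤ 2n` agree with those of `μ`. -/
theorem stmt_7
    (μ : Measure ℝ) [IsProbabilityMeasure μ]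
    (hcomp : IsCompact (measSupport μ))
    (hinf : (measSupport μ).Infinite)
    (p : ℕ → Polynomial ℝ)
    (hdeg : ∀ m, (p m).natDegree = m)
    (hlead : ∀ m, 0 < (p m).leadingCoeff)
    (horth : ∀ m l, ∫ x, (p m).eval x * (p l).eval x ∂μ = if m = l then 1 else 0)
    (n : ℕ) (a : ℝ)
    (ha : a = (p n).leadingCoeff / (p (n + 1)).leadingCoeff)
    (ρ : Measure ℝ)
    (hρ : ρ = volume.withDensity (fun x => ENNReal.ofReal
      ((π * (a ^ 2 * ((p (n + 1)).eval x) ^ 2 + ((p n).eval x) ^ 2))⁻¹))) :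
    IsProbabilityMeasure ρ ∧
    ∀ ℓ : ℕ, ℓ ≤ 2 * n → ∫ x, x ^ ℓ ∂ρ = ∫ x, x ^ ℓ ∂μ :=
  stmt_7_general μ p n ⟨fun k _ => hdeg k, fun k _ l _ => horth k l⟩ a ha ρ hρ
end
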